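/- arXiv:1606.06176 — 2 statements merged into one kernel-verified Lean document; each statement's English description precedes it below -/
import Mathlib

section
/- Fix an integer r ≥ 1 and real numbers ν > 0 and T > 0. There exists a constant C > 0, depending only on r, ν, T, with the following property. Let N ≥ 1, let A, B ≥ 0, and let F : [0,∞) → H^{r+1}(𝕋³) be a continuous family of zero-mean functions (or vector fields) on 𝕋³ satisfying ‖F(s)‖_{L²(𝕋³)} ≤ A e^{−νN²s} and ‖F(s)‖_{H^{r+1}(𝕋³)} ≤ B e^{−νN²s} for all s ≥ 0. Then for every t ≥ T one has ∫₀^t ‖e^{ν(t−s)Δ}F(s)‖_{H^{r+1}(𝕋³)} ds ≤ C (A N^{−2} + B e^{−νN²t/2}). -/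
open MeasureTheory Real Set

noncomputable section

abbrev E3 := Fin 3 → ℝ

def T3 : Set E3 := Set.Icc 0 (fun _ => 2 * Real.pi)

def SpacePeriodic {ι : Type*} (f : E3 → ι) : Prop :=
  ∀ (x : E3) (j : Fin 3), f (x + (2 * Real.pi) • (Pi.single j 1 : E3)) = f x

def pd (j : Fin 3) (f : E3 → ℝ) : E3 → ℝ := fun x => fderiv ℝ f x (Pi.single j 1 : E3)

def pdM (β : Fin 3 → ℕ) (f : E3 → ℝ) : E3 → ℝ :=
  (pd 0)^[β 0] ((pd 1)^[β 1] ((pd 2)^[β 2] f))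

def midx (m : ℕ) : Finset (Fin 3 → ℕ) := Finset.Nat.antidiagonalTuple 3 m

def gradSq {ι : Type*} [Fintype ι] (m : ℕ) (f : E3 → ι → ℝ) (x : E3) : ℝ :=
  ∑ i : ι, ∑ β ∈ midx m, (pdM β (fun y => f y i) x) ^ 2

def HnormSq {ι : Type*} [Fintype ι] (r : ℕ) (f : E3 → ι → ℝ) : ℝ :=
  ∑ m ∈ Finset.range (r + 1), ∫ x in T3, gradSq m f x

def Hnorm {ι : Type*} [Fintype ι] (r : ℕ) (f : E3 → ι → ℝ) : ℝ :=
  Real.sqrt (HnormSq r f)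

def L2norm {ι : Type*} [Fintype ι] (f : E3 → ι → ℝ) : ℝ := Hnorm 0 f

def LinfGrad {ι : Type*} [Fintype ι] (m : ℕ) (f : E3 → ι → ℝ) : ℝ :=
  ⨆ x : E3, Real.sqrt (gradSq m f x)

def Linf {ι : Type*} [Fintype ι] (f : E3 → ι → ℝ) : ℝ := LinfGrad 0 f

def ZeroMean {ι : Type*} [Fintype ι] (f : E3 → ι → ℝ) : Prop :=
  ∀ i, (∫ x in T3, f x i) = 0

def vdiv (u : E3 → E3) : E3 → ℝ := fun x => ∑ j, pd j (fun y => u y j) x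

def vcurl (u : E3 → E3) : E3 → E3 := fun x =>
  ![pd 1 (fun y => u y 2) x - pd 2 (fun y => u y 1) x,
    pd 2 (fun y => u y 0) x - pd 0 (fun y => u y 2) x,
    pd 0 (fun y => u y 1) x - pd 1 (fun y => u y 0) x]

def lap (f : E3 → ℝ) : E3 → ℝ := fun x => ∑ j, pd j (pd j f) x

def IsNS (ν : ℝ) (I : Set ℝ) (u : E3 → ℝ → E3) (P : E3 → ℝ → ℝ) : Prop :=
  (∀ t ∈ I, ∀ (x : E3) (i : Fin 3),
      derivWithin (fun τ => u x τ i) I t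
        + (∑ j, u x t j * pd j (fun y => u y t i) x)
        - ν * lap (fun y => u y t i) x
        = - pd i (fun y => P y t) x) ∧
  (∀ t ∈ I, ∀ x : E3, vdiv (fun y => u y t) x = 0)

def SmoothOnTime (u : E3 → ℝ → E3) (I : Set ℝ) : Prop :=
  ContDiffOn ℝ (⊤ : ℕ∞) (fun p : E3 × ℝ => u p.1 p.2) (Set.univ ×ˢ I)

def wNormInf (m : ℕ) (w : E3 → ℝ → E3) (t : ℝ) : ℝ := LinfGrad m (fun x => w x t)

def Q (w : E3 → ℝ → E3) : ℕ → ℝ → ℝ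
  | 0, _ => 1
  | (j + 1), t => 1 + ∑ m ∈ (Finset.range (j + 1)).attach,
      Q w m.1 t * ∫ τ in (0:ℝ)..t, (wNormInf (j + 1 - m.1) w τ) ^ 2
  decreasing_by exact Finset.mem_range.mp m.2

def Qinf (w : E3 → ℝ → E3) (r : ℕ) : ℝ := ⨆ t : Set.Ici (0:ℝ), Q w r t

/-- The (scaled) heat equation `∂ₜ v = κ Δv` on `𝕋³ × I`. -/
def IsHeat (κ : ℝ) (I : Set ℝ) (v : E3 → ℝ → ℝ) : Prop :=
  ∀ t ∈ I, ∀ x : E3, derivWithin (fun τ => v x τ) I t = κ * lap (fun y => v y t) x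

/-- Sobolev `H^m` norm of a scalar function on `𝕋³`. -/
def Hnorm1 (m : ℕ) (f : E3 → ℝ) : ℝ := Hnorm m (fun x (_ : Fin 1) => f x)

/-- `L²` norm of a scalar function on `𝕋³`. -/
def L2norm1 (f : E3 → ℝ) : ℝ := L2norm (fun x (_ : Fin 1) => f x)


/-- The spatial partial derivative of a function of space and time. -/
def spatialDeriv (j : Fin 3) (w : E3 → ℝ → ℝ) : E3 → ℝ → ℝ :=
  fun x τ => pd j (fun y => w y τ) x

/-- The closed upper half of space-time. -/
def closedHalf : Set (E3 × ℝ) := Set.univ ×ˢ Set.Ici 0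

theorem uniqueDiffOn_closedHalf : UniqueDiffOn ℝ closedHalf :=
  uniqueDiffOn_univ.prod (uniqueDiffOn_Ici 0)

/-- `w` is smooth up to time zero, spatially periodic, and solves `∂ₜ w = ν Δw` at positive times. -/
structure IsPeriodicHeatFlow (ν : ℝ) (w : E3 → ℝ → ℝ) : Prop where
  smooth : ContDiffOn ℝ (⊤ : ℕ∞) (fun p : E3 × ℝ => w p.1 p.2) closedHalf
  periodic : ∀ τ, SpacePeriodic (fun x => w x τ)
  heat : ∀ τ, 0 < τ → ∀ x, HasDerivAt (w x) (ν * lap (fun y => w y τ) x) τ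

theorem hasFDerivAt_slice {w : E3 → ℝ → ℝ}
    (hw : ContDiffOn ℝ (⊤ : ℕ∞) (fun p : E3 × ℝ => w p.1 p.2) closedHalf)
    {τ : ℝ} (hτ : 0 ≤ τ) (x : E3) :
    HasFDerivAt (fun y => w y τ)
      ((fderivWithin ℝ (fun p : E3 × ℝ => w p.1 p.2) closedHalf (x, τ)).comp
        (ContinuousLinearMap.inl ℝ E3 ℝ)) x := by
  have hmem : (x, τ) ∈ closedHalf := ⟨mem_univ _, hτ⟩
  have h1 := ((hw.differentiableOn (by simp)) _ hmem).hasFDerivWithinAt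
  have h2 : HasFDerivWithinAt (fun y : E3 => (y, τ)) (ContinuousLinearMap.inl ℝ E3 ℝ) univ x :=
    (hasFDerivAt_prodMk_left x τ).hasFDerivWithinAt
  have h3 := HasFDerivWithinAt.comp (f := fun y : E3 => (y, τ))
    (g := fun p : E3 × ℝ => w p.1 p.2) x h1 h2 (fun y _ => ⟨mem_univ _, hτ⟩)
  exact hasFDerivWithinAt_univ.1 h3

theorem contDiff_slice {w : E3 → ℝ → ℝ}
    (hw : ContDiffOn ℝ (⊤ : ℕ∞) (fun p : E3 × ℝ => w p.1 p.2) closedHalf)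
    {τ : ℝ} (hτ : 0 ≤ τ) : ContDiff ℝ (⊤ : ℕ∞) (fun y => w y τ) := by
  rw [← contDiffOn_univ]
  exact hw.comp (f := fun y : E3 => (y, τ)) (by fun_prop) (fun y _ => ⟨mem_univ _, hτ⟩)

theorem contDiffOn_spatialDeriv {w : E3 → ℝ → ℝ}
    (hw : ContDiffOn ℝ (⊤ : ℕ∞) (fun p : E3 × ℝ => w p.1 p.2) closedHalf) (j : Fin 3) :
    ContDiffOn ℝ (⊤ : ℕ∞) (fun p : E3 × ℝ => spatialDeriv j w p.1 p.2) closedHalf := by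
  have h := (hw.fderivWithin uniqueDiffOn_closedHalf (m := (⊤ : ℕ∞)) (by simp)).clm_apply
    (contDiffOn_const (c := ((Pi.single j 1 : E3), (0 : ℝ))))
  refine h.congr fun p hp => ?_
  simp only [spatialDeriv, pd]
  rw [(hasFDerivAt_slice hw hp.2 p.1).fderiv]
  simp

theorem contDiffAt_of_pos {w : E3 → ℝ → ℝ}
    (hw : ContDiffOn ℝ (⊤ : ℕ∞) (fun p : E3 × ℝ => w p.1 p.2) closedHalf)
    {τ : ℝ} (hτ : 0 < τ) (x : E3) :
    ContDiffAt ℝ (⊤ : ℕ∞) (fun p : E3 × ℝ => w p.1 p.2) (x, τ) :=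
  hw.contDiffAt (prod_mem_nhds Filter.univ_mem (Ici_mem_nhds hτ))

theorem spatialDeriv_eq_fderiv {w : E3 → ℝ → ℝ}
    (hw : ContDiffOn ℝ (⊤ : ℕ∞) (fun p : E3 × ℝ => w p.1 p.2) closedHalf) (j : Fin 3)
    {τ : ℝ} (hτ : 0 < τ) (x : E3) :
    spatialDeriv j w x τ =
      fderiv ℝ (fun p : E3 × ℝ => w p.1 p.2) (x, τ) ((Pi.single j 1 : E3), (0 : ℝ)) := by
  have h := ((contDiffAt_of_pos hw hτ x).differentiableAt (by simp)).hasFDerivAt.comp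
    (f := fun y : E3 => (y, τ)) x (hasFDerivAt_prodMk_left x τ)
  have h' : HasFDerivAt (fun y => w y τ) _ x := h
  simp only [spatialDeriv, pd]
  rw [h'.fderiv]
  simp

theorem hasDerivAt_time {w : E3 → ℝ → ℝ}
    (hw : ContDiffOn ℝ (⊤ : ℕ∞) (fun p : E3 × ℝ => w p.1 p.2) closedHalf)
    {τ : ℝ} (hτ : 0 < τ) (x : E3) :
    HasDerivAt (w x) (fderiv ℝ (fun p : E3 × ℝ => w p.1 p.2) (x, τ) ((0 : E3), (1 : ℝ))) τ := by
  have h := ((contDiffAt_of_pos hw hτ x).differentiableAt (by simp)).hasFDerivAt.comp_hasDerivAt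
    (f := fun σ : ℝ => (x, σ)) τ ((hasDerivAt_const τ x).prodMk (hasDerivAt_id τ))
  exact h

theorem fderiv_fderiv_comm {E : Type*} [NormedAddCommGroup E] [NormedSpace ℝ E] {f : E → ℝ}
    {p : E} (hf : ContDiffAt ℝ (⊤ : ℕ∞) f p) (u v : E) :
    fderiv ℝ (fun q => fderiv ℝ f q u) p v = fderiv ℝ (fun q => fderiv ℝ f q v) p u := by
  have hd : DifferentiableAt ℝ (fderiv ℝ f) p :=
    (hf.fderiv_right (m := (⊤ : ℕ∞)) (by simp)).differentiableAt (by simp)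
  have hsymm : IsSymmSndFDerivAt ℝ f p := hf.isSymmSndFDerivAt
    (by simpa using (by exact_mod_cast le_top : ((2 : ℕ∞) : WithTop ℕ∞) ≤ ((⊤ : ℕ∞) : WithTop ℕ∞)))
  rw [fderiv_clm_apply hd (by fun_prop), fderiv_clm_apply hd (by fun_prop)]
  simpa using hsymm v u

theorem pd_comm {f : E3 → ℝ} (hf : ContDiff ℝ (⊤ : ℕ∞) f) (i j : Fin 3) :
    pd i (pd j f) = pd j (pd i f) :=
  funext fun _ => fderiv_fderiv_comm hf.contDiffAt _ _

theorem contDiff_pd {f : E3 → ℝ} (hf : ContDiff ℝ (⊤ : ℕ∞) f) (j : Fin 3) :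
    ContDiff ℝ (⊤ : ℕ∞) (pd j f) :=
  (hf.fderiv_right (m := (⊤ : ℕ∞)) (by simp)).clm_apply contDiff_const

theorem lap_pd {f : E3 → ℝ} (hf : ContDiff ℝ (⊤ : ℕ∞) f) (j : Fin 3) :
    lap (pd j f) = pd j (lap f) := by
  funext x
  have h : ∀ i, DifferentiableAt ℝ (pd i (pd i f)) x := fun i =>
    (contDiff_pd (contDiff_pd hf i) i).contDiffAt.differentiableAt (by simp)
  have hs : pd j (lap f) x = ∑ i, pd j (pd i (pd i f)) x := by
    have e : lap f = fun y => ∑ i, pd i (pd i f) y := rfl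
    rw [e, pd, fderiv_fun_sum fun i _ => h i]
    simp [pd]
  rw [hs]
  refine Finset.sum_congr rfl fun i _ => ?_
  rw [pd_comm hf i j, pd_comm (contDiff_pd hf i) i j]

theorem SpacePeriodic.pd {f : E3 → ℝ} (hf : SpacePeriodic f) (j : Fin 3) :
    SpacePeriodic (pd j f) := by
  intro x i
  have h : (fun y => f (y + (2 * Real.pi) • (Pi.single i 1 : E3))) = f := funext fun y => hf y i
  simp only [_root_.pd]
  rw [← fderiv_comp_add_right, h]

theorem IsPeriodicHeatFlow.spatialDeriv {ν : ℝ} {w : E3 → ℝ → ℝ} (hw : IsPeriodicHeatFlow ν w)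
    (j : Fin 3) : IsPeriodicHeatFlow ν (spatialDeriv j w) where
  smooth := contDiffOn_spatialDeriv hw.smooth j
  periodic τ := (hw.periodic τ).pd j
  heat τ hτ x := by
    have h := hasDerivAt_time (contDiffOn_spatialDeriv hw.smooth j) hτ x
    have hnear : ∀ᶠ p : E3 × ℝ in nhds (x, τ), 0 < p.2 :=
      continuous_snd.continuousAt.eventually (lt_mem_nhds hτ)
    have e1 : (fun p : E3 × ℝ => _root_.spatialDeriv j w p.1 p.2) =ᶠ[nhds (x, τ)]
        fun p => fderiv ℝ (fun p : E3 × ℝ => w p.1 p.2) p ((Pi.single j 1 : E3), (0 : ℝ)) :=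
      hnear.mono fun p hp => spatialDeriv_eq_fderiv hw.smooth j hp p.1
    rw [e1.fderiv_eq, fderiv_fderiv_comm (contDiffAt_of_pos hw.smooth hτ x)] at h
    have hd : DifferentiableAt ℝ (fun q => fderiv ℝ (fun p : E3 × ℝ => w p.1 p.2) q
        ((0 : E3), (1 : ℝ))) (x, τ) :=
      (((contDiffAt_of_pos hw.smooth hτ x).fderiv_right (m := (⊤ : ℕ∞))
        (by simp)).differentiableAt (by simp)).clm_apply (by fun_prop)
    have e2 := (hd.hasFDerivAt.comp (f := fun y : E3 => (y, τ)) x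
      (hasFDerivAt_prodMk_left x τ)).fderiv
    have e3 : ((fun q => fderiv ℝ (fun p : E3 × ℝ => w p.1 p.2) q ((0 : E3), (1 : ℝ))) ∘
        fun y : E3 => (y, τ)) = fun y => ν * lap (fun y => w y τ) y :=
      funext fun y => (hasDerivAt_time hw.smooth hτ y).unique (hw.heat τ hτ y)
    rw [e3] at e2
    have hsl := contDiff_slice hw.smooth hτ.le
    have hlap : ContDiff ℝ (⊤ : ℕ∞) (lap fun y => w y τ) :=
      ContDiff.sum fun i _ => contDiff_pd (contDiff_pd hsl i) i
    have e4 := congrArg (fun L => L (Pi.single j 1 : E3)) e2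
    rw [fderiv_const_mul (hlap.contDiffAt.differentiableAt (by simp))] at e4
    convert h using 1
    have e5 : ν * lap (fun y => _root_.spatialDeriv j w y τ) x =
        ν * pd j (lap fun y => w y τ) x := by rw [← lap_pd hsl j]; rfl
    rw [e5]
    simpa [pd] using e4

theorem isCompact_T3 : IsCompact T3 := isCompact_Icc

theorem measurableSet_T3 : MeasurableSet T3 := measurableSet_Icc

theorem integrableOn_T3 {g : E3 → ℝ} (hg : Continuous g) : IntegrableOn g T3 :=
  hg.continuousOn.integrableOn_compact isCompact_T3

/-- The divergence theorem on the torus. -/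
theorem integral_divergence_eq_zero {G : Fin 3 → E3 → ℝ}
    (hG : ∀ i, ContDiff ℝ (⊤ : ℕ∞) (G i)) (hp : ∀ i, SpacePeriodic (G i)) :
    ∫ x in T3, ∑ i, pd i (G i) x = 0 := by
  have hle : (0 : E3) ≤ fun _ => 2 * Real.pi := fun _ => by simp [Real.pi_pos.le]
  have key := integral_divergence_of_hasFDerivAt_off_countable' (n := 2) (0 : E3)
    (fun _ => 2 * Real.pi) hle G (fun i x => fderiv ℝ (G i) x) ∅ countable_empty
    (fun i => (hG i).continuous.continuousOn)
    (fun x _ i => ((hG i).contDiffAt.differentiableAt (by simp)).hasFDerivAt)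
    (integrableOn_T3 (continuous_finsetSum _ fun i _ => (contDiff_pd (hG i) i).continuous))
  refine key.trans (Finset.sum_eq_zero fun i _ => ?_)
  have hface : ∀ y : Fin 2 → ℝ, G i (i.insertNth (2 * Real.pi) y) =
      G i (i.insertNth ((0 : E3) i) y) := fun y => by
    rw [← hp i (i.insertNth ((0 : E3) i) y) i]
    congr 1
    funext k
    refine Fin.succAboveCases i ?_ (fun k => ?_) k <;> simp
  simp [hface]

/-- The squared `L²` norm of a time slice. -/
def energy (w : E3 → ℝ → ℝ) (τ : ℝ) : ℝ := ∫ x in T3, w x τ ^ 2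

theorem energy_nonneg (w : E3 → ℝ → ℝ) (τ : ℝ) : 0 ≤ energy w τ :=
  integral_nonneg fun _ => sq_nonneg _

namespace IsPeriodicHeatFlow

variable {ν : ℝ} {w : E3 → ℝ → ℝ}

theorem integral_mul_lap (hw : IsPeriodicHeatFlow ν w) {τ : ℝ} (hτ : 0 ≤ τ) :
    ∫ x in T3, w x τ * lap (fun y => w y τ) x = -∑ j, energy (_root_.spatialDeriv j w) τ := by
  set f : E3 → ℝ := fun y => w y τ with hf
  have hsl : ContDiff ℝ (⊤ : ℕ∞) f := contDiff_slice hw.smooth hτ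
  have hd := fun i => contDiff_pd hsl i
  have h0 := integral_divergence_eq_zero (G := fun i x => f x * pd i f x)
    (fun i => hsl.mul (hd i)) (fun i x j =>
      congrArg₂ (· * ·) (hw.periodic τ x j) ((hw.periodic τ).pd i x j))
  have h1 : ∀ i x, pd i (fun y => f y * pd i f y) x = f x * pd i (pd i f) x + pd i f x ^ 2 := by
    intro i x
    have := fderiv_fun_mul (hsl.contDiffAt.differentiableAt (by simp) : DifferentiableAt ℝ f x)
      ((hd i).contDiffAt.differentiableAt (by simp))
    rw [pd, this]
    simp [pd, sq]
  have h2 : ∀ x, ∑ i, pd i (fun y => f y * pd i f y) x = f x * lap f x + ∑ i, pd i f x ^ 2 := by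
    intro x
    simp only [h1, Finset.sum_add_distrib, ← Finset.mul_sum, lap]
  have hlap : Continuous (lap f) :=
    continuous_finsetSum _ fun i _ => (contDiff_pd (hd i) i).continuous
  have hmul : IntegrableOn (fun x => f x * lap f x) T3 := integrableOn_T3 (hsl.continuous.mul hlap)
  have hsq : ∀ i, IntegrableOn (fun x => pd i f x ^ 2) T3 := fun i =>
    integrableOn_T3 ((hd i).continuous.pow 2)
  simp only [h2] at h0
  rw [integral_add hmul
    (integrable_finsetSum _ fun i _ => hsq i), integral_finsetSum _ fun i _ => hsq i] at h0
  exact eq_neg_of_add_eq_zero_left h0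

theorem hasDerivAt_energy (hw : IsPeriodicHeatFlow ν w) {τ : ℝ} (hτ : 0 < τ) :
    HasDerivAt (energy w) (-(2 * ν) * ∑ j, energy (_root_.spatialDeriv j w) τ) τ := by
  have hcont : ContinuousOn (fun p : E3 × ℝ =>
      2 * w p.1 p.2 * (ν * lap (fun y => w y p.2) p.1)) closedHalf := by
    refine (continuousOn_const.mul hw.smooth.continuousOn).mul (continuousOn_const.mul ?_)
    exact continuousOn_finsetSum _ fun i _ =>
      (contDiffOn_spatialDeriv (contDiffOn_spatialDeriv hw.smooth i) i).continuousOn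
  have hpos : ∀ σ ∈ Icc (τ / 2) (2 * τ), 0 < σ := fun σ hσ => by linarith [hσ.1]
  obtain ⟨M, hM⟩ := (isCompact_T3.prod (isCompact_Icc (a := τ / 2) (b := 2 * τ))
    ).exists_bound_of_continuousOn (hcont.mono fun p hp => ⟨mem_univ _, (hpos _ hp.2).le⟩)
  have hsl : ∀ σ, 0 < σ → Continuous fun x => w x σ := fun σ hσ =>
    (contDiff_slice hw.smooth hσ.le).continuous
  have hc' : Continuous fun x => 2 * w x τ * (ν * lap (fun y => w y τ) x) :=
    hcont.comp_continuous (f := fun x : E3 => (x, τ)) (by fun_prop) fun x => ⟨mem_univ _, hτ.le⟩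
  have key := (hasDerivAt_integral_of_dominated_loc_of_deriv_le (μ := volume.restrict T3)
    (F := fun σ x => w x σ ^ 2) (F' := fun σ x => 2 * w x σ * (ν * lap (fun y => w y σ) x))
    (s := Icc (τ / 2) (2 * τ)) (bound := fun _ => M) (x₀ := τ)
    (Icc_mem_nhds (by linarith) (by linarith))
    ((lt_mem_nhds hτ).mono fun σ hσ => ((hsl σ hσ).pow 2).aestronglyMeasurable)
    (integrableOn_T3 ((hsl τ hτ).pow 2)) hc'.aestronglyMeasurable
    ((ae_restrict_iff' measurableSet_T3).2 (.of_forall fun x hx σ hσ => hM (x, σ) ⟨hx, hσ⟩))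
    (integrableOn_T3 continuous_const)
    (.of_forall fun x σ hσ => by
      simpa using (hw.heat σ (hpos σ hσ) x).fun_pow 2)).2
  refine HasDerivAt.congr_deriv key ?_
  have e : (fun x => 2 * w x τ * (ν * lap (fun y => w y τ) x)) =
      fun x => (2 * ν) * (w x τ * lap (fun y => w y τ) x) := by funext x; ring
  rw [e, integral_const_mul, hw.integral_mul_lap hτ.le]
  ring

theorem continuousOn_energy (hw : IsPeriodicHeatFlow ν w) : ContinuousOn (energy w) (Ici 0) := by
  have h : Continuous fun p : ℝ × E3 => w p.2 (max p.1 0) ^ 2 :=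
    (hw.smooth.continuousOn.comp_continuous (f := fun p : ℝ × E3 => (p.2, max p.1 0))
      (by fun_prop) fun p => ⟨mem_univ _, mem_Ici.2 (le_max_right _ _)⟩).pow 2
  have h' := continuous_parametric_integral_of_continuous (μ := (volume : Measure E3))
    (f := fun τ x => w x (max τ 0) ^ 2) h isCompact_T3
  exact h'.continuousOn.congr fun τ hτ => by simp only [energy, max_eq_left (mem_Ici.1 hτ)]

theorem antitoneOn_energy (hν : 0 < ν) (hw : IsPeriodicHeatFlow ν w) :
    AntitoneOn (energy w) (Ici 0) := by
  refine antitoneOn_of_deriv_nonpos (convex_Ici 0) hw.continuousOn_energy ?_ ?_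
  · rw [interior_Ici]
    exact fun τ hτ => (hw.hasDerivAt_energy hτ).differentiableAt.differentiableWithinAt
  · rw [interior_Ici]
    intro τ hτ
    rw [(hw.hasDerivAt_energy hτ).deriv]
    have := Finset.sum_nonneg fun j (_ : j ∈ Finset.univ) =>
      energy_nonneg (_root_.spatialDeriv j w) τ
    nlinarith

/-- Parabolic smoothing: one derivative is gained after a time `h`. -/
theorem energy_spatialDeriv_le (hν : 0 < ν) (hw : IsPeriodicHeatFlow ν w) (j : Fin 3) {τ h : ℝ}
    (hτ : 0 ≤ τ) (hh : 0 < h) :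
    energy (_root_.spatialDeriv j w) (τ + h) ≤ (2 * ν * h)⁻¹ * energy w τ := by
  set E := energy (_root_.spatialDeriv j w) (τ + h) with hE
  have hanti : AntitoneOn (fun σ => energy w σ + 2 * ν * E * σ) (Icc τ (τ + h)) := by
    refine antitoneOn_of_deriv_nonpos (convex_Icc _ _) ?_ ?_ ?_
    · exact (hw.continuousOn_energy.mono fun σ hσ => hτ.trans hσ.1).add (by fun_prop)
    · rw [interior_Icc]
      exact fun σ hσ => ((hw.hasDerivAt_energy (hτ.trans_lt hσ.1)).differentiableAt.add
        (by fun_prop)).differentiableWithinAt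
    · rw [interior_Icc]
      intro σ hσ
      have hσ0 : 0 < σ := hτ.trans_lt hσ.1
      have hd := (hw.hasDerivAt_energy hσ0).add ((hasDerivAt_id σ).const_mul (2 * ν * E))
      have hle : E ≤ ∑ i, energy (_root_.spatialDeriv i w) σ :=
        ((hw.spatialDeriv j).antitoneOn_energy hν hσ0.le (by simp; linarith) hσ.2.le).trans
          (Finset.single_le_sum (f := fun i => energy (_root_.spatialDeriv i w) σ)
            (fun i _ => energy_nonneg _ _) (Finset.mem_univ j))
      have hd' : deriv (fun σ => energy w σ + 2 * ν * E * σ) σ = _ := hd.deriv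
      rw [hd']
      nlinarith
  have h1 := hanti (left_mem_Icc.2 (by linarith)) (right_mem_Icc.2 (by linarith))
    (by linarith : τ ≤ τ + h)
  have h2 := energy_nonneg w (τ + h)
  rw [inv_mul_eq_div, le_div_iff₀ (by positivity)]
  simp only at h1
  nlinarith

theorem iterate_spatialDeriv (hw : IsPeriodicHeatFlow ν w) (j : Fin 3) (n : ℕ) :
    IsPeriodicHeatFlow ν ((_root_.spatialDeriv j)^[n] w) := by
  induction n with
  | zero => exact hw
  | succ n ih => rw [Function.iterate_succ_apply']; exact ih.spatialDeriv j

theorem energy_iterate_spatialDeriv_le (hν : 0 < ν) (hw : IsPeriodicHeatFlow ν w) (j : Fin 3)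
    (n : ℕ) {τ h : ℝ} (hτ : 0 ≤ τ) (hh : 0 < h) :
    energy ((_root_.spatialDeriv j)^[n] w) (τ + n * h) ≤ (2 * ν * h)⁻¹ ^ n * energy w τ := by
  induction n with
  | zero => simp
  | succ n ih =>
    rw [Function.iterate_succ_apply', pow_succ', mul_assoc]
    have h1 := (hw.iterate_spatialDeriv j n).energy_spatialDeriv_le hν j
      (τ := τ + n * h) (by positivity) hh
    have e : τ + ((n + 1 : ℕ) : ℝ) * h = τ + n * h + h := by push_cast; ring
    rw [e]
    exact h1.trans (by gcongr)

end IsPeriodicHeatFlow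

/-- The mixed spatial derivative of multi-index `β`. -/
def mixedDeriv (β : Fin 3 → ℕ) (w : E3 → ℝ → ℝ) : E3 → ℝ → ℝ :=
  (spatialDeriv 0)^[β 0] ((spatialDeriv 1)^[β 1] ((spatialDeriv 2)^[β 2] w))

theorem iterate_spatialDeriv_slice (j : Fin 3) (n : ℕ) (w : E3 → ℝ → ℝ) (τ : ℝ) :
    (fun x => (spatialDeriv j)^[n] w x τ) = (pd j)^[n] (fun x => w x τ) := by
  induction n with
  | zero => rfl
  | succ n ih =>
    rw [Function.iterate_succ_apply', Function.iterate_succ_apply', ← ih]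
    rfl

theorem pdM_slice (β : Fin 3 → ℕ) (w : E3 → ℝ → ℝ) (τ : ℝ) :
    pdM β (fun x => w x τ) = fun x => mixedDeriv β w x τ := by
  simp only [pdM, mixedDeriv, iterate_spatialDeriv_slice]

namespace IsPeriodicHeatFlow

variable {ν : ℝ} {w : E3 → ℝ → ℝ}

theorem mixedDeriv (hw : IsPeriodicHeatFlow ν w) (β : Fin 3 → ℕ) :
    IsPeriodicHeatFlow ν (mixedDeriv β w) :=
  ((hw.iterate_spatialDeriv _ _).iterate_spatialDeriv _ _).iterate_spatialDeriv _ _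

theorem energy_mixedDeriv_le (hν : 0 < ν) (hw : IsPeriodicHeatFlow ν w) (β : Fin 3 → ℕ) {h : ℝ}
    (hh : 0 < h) {τ : ℝ} (hτ : (∑ i, β i : ℕ) * h ≤ τ) :
    energy (_root_.mixedDeriv β w) τ ≤ (2 * ν * h)⁻¹ ^ (∑ i, β i) * energy w 0 := by
  have w2 := hw.iterate_spatialDeriv 2 (β 2)
  have w1 := w2.iterate_spatialDeriv 1 (β 1)
  have h2 := hw.energy_iterate_spatialDeriv_le hν 2 (β 2) le_rfl hh
  have h1 := w2.energy_iterate_spatialDeriv_le hν 1 (β 1) (τ := 0 + β 2 * h) (by positivity) hh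
  have h0 := w1.energy_iterate_spatialDeriv_le hν 0 (β 0) (τ := 0 + β 2 * h + β 1 * h)
    (by positivity) hh
  rw [Fin.sum_univ_three] at hτ ⊢
  push_cast at hτ
  have hm : energy (_root_.mixedDeriv β w) τ ≤
      energy (_root_.mixedDeriv β w) (0 + β 2 * h + β 1 * h + β 0 * h) :=
    (hw.mixedDeriv β).antitoneOn_energy hν (mem_Ici.2 (by positivity))
      (mem_Ici.2 (by refine le_trans ?_ hτ; positivity)) (by linarith)
  have hc : 0 ≤ (2 * ν * h)⁻¹ := by positivity
  rw [pow_add, pow_add, mul_assoc, mul_assoc]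
  refine hm.trans (h0.trans ?_)
  gcongr
  refine h1.trans ?_
  gcongr

theorem integral_gradSq (hw : IsPeriodicHeatFlow ν w) (m : ℕ) {τ : ℝ} (hτ : 0 ≤ τ) :
    ∫ x in T3, gradSq m (fun x (_ : Fin 1) => w x τ) x =
      ∑ β ∈ midx m, energy (_root_.mixedDeriv β w) τ := by
  simp only [gradSq, Finset.univ_unique, Finset.sum_singleton, pdM_slice, energy]
  exact integral_finsetSum _ fun β _ =>
    integrableOn_T3 ((contDiff_slice (hw.mixedDeriv β).smooth hτ).continuous.pow 2)

theorem Hnorm1_eq (hw : IsPeriodicHeatFlow ν w) (m : ℕ) {τ : ℝ} (hτ : 0 ≤ τ) :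
    Hnorm1 m (fun x => w x τ) =
      √(∑ k ∈ Finset.range (m + 1), ∑ β ∈ midx k, energy (_root_.mixedDeriv β w) τ) := by
  simp only [Hnorm1, Hnorm, HnormSq, hw.integral_gradSq _ hτ]

theorem L2norm1_eq (hw : IsPeriodicHeatFlow ν w) {τ : ℝ} (hτ : 0 ≤ τ) :
    L2norm1 (fun x => w x τ) = √(energy w τ) := by
  have h := hw.Hnorm1_eq 0 hτ
  rw [Hnorm1] at h
  rw [L2norm1, L2norm, h]
  simp [midx, _root_.mixedDeriv, Finset.Nat.antidiagonalTuple_zero_right]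

theorem Hnorm1_le (hν : 0 < ν) (hw : IsPeriodicHeatFlow ν w) (m : ℕ) {τ : ℝ} (hτ : 0 ≤ τ) :
    Hnorm1 m (fun x => w x τ) ≤ Hnorm1 m (fun x => w x 0) := by
  rw [hw.Hnorm1_eq m hτ, hw.Hnorm1_eq m le_rfl]
  refine Real.sqrt_le_sqrt (Finset.sum_le_sum fun k _ => Finset.sum_le_sum fun β _ => ?_)
  exact (hw.mixedDeriv β).antitoneOn_energy hν self_mem_Ici hτ hτ

theorem Hnorm1_le_L2norm1 (hν : 0 < ν) (hw : IsPeriodicHeatFlow ν w) (m : ℕ) {h τ : ℝ}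
    (hh : 0 < h) (hτ : m * h ≤ τ) :
    Hnorm1 m (fun x => w x τ) ≤
      √(∑ k ∈ Finset.range (m + 1), ∑ _β ∈ midx k, (2 * ν * h)⁻¹ ^ k) *
        L2norm1 (fun x => w x 0) := by
  have hτ0 : 0 ≤ τ := le_trans (by positivity) hτ
  rw [hw.Hnorm1_eq m hτ0, hw.L2norm1_eq le_rfl, ← Real.sqrt_mul' _ (energy_nonneg _ _)]
  refine Real.sqrt_le_sqrt ?_
  simp only [Finset.sum_mul]
  refine Finset.sum_le_sum fun k hk => Finset.sum_le_sum fun β hβ => ?_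
  have hsum : ∑ i, β i = k := Finset.Nat.mem_antidiagonalTuple.1 hβ
  have hkm : (k : ℝ) ≤ m := by exact_mod_cast Nat.lt_succ_iff.1 (Finset.mem_range.1 hk)
  rw [← hsum] at hkm ⊢
  exact hw.energy_mixedDeriv_le hν β hh ((mul_le_mul_of_nonneg_right hkm hh.le).trans hτ)

end IsPeriodicHeatFlow

theorem isPeriodicHeatFlow_of_isHeat {ν : ℝ} {v : E3 → ℝ → ℝ}
    (hs : ContDiffOn ℝ (⊤ : ℕ∞) (fun p : E3 × ℝ => v p.1 p.2) (Set.univ ×ˢ Set.Ici 0))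
    (hp : ∀ τ, SpacePeriodic (fun x => v x τ)) (hh : IsHeat ν (Set.Ici 0) v) :
    IsPeriodicHeatFlow ν v where
  smooth := hs
  periodic := hp
  heat τ hτ x := by
    have h := hasDerivAt_time hs hτ x
    rw [← hh τ hτ.le x, derivWithin_of_mem_nhds (Ici_mem_nhds hτ)]
    exact h.differentiableAt.hasDerivAt

theorem intervalIntegral_exp_neg_mul_le {a : ℝ} (ha : 0 < a) (x y : ℝ) :
    ∫ s in x..y, Real.exp (-a * s) ≤ Real.exp (-a * x) / a := by
  have hd : ∀ s ∈ uIcc x y,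
      HasDerivAt (fun s => -(Real.exp (-a * s) / a)) (Real.exp (-a * s)) s := fun s _ => by
    refine HasDerivAt.congr_deriv (((hasDerivAt_id s).const_mul (-a)).exp.div_const a).neg ?_
    field_simp
    simp
  rw [intervalIntegral.integral_eq_sub_of_hasDerivAt hd
    (Continuous.intervalIntegrable (by fun_prop) _ _)]
  have : 0 < Real.exp (-a * y) / a := by positivity
  linarith

/-- Duhamel-type heat kernel estimate: `V s` denotes the heat evolution
`τ ↦ e^{ντΔ} F(s)` of the zero-mean family `F`: the constant `C` depends only on
`r`, `ν`, `T`. -/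
theorem heat_duhamel_estimate (r : ℕ) (hr : 1 ≤ r) (ν T : ℝ) (hν : 0 < ν) (hT : 0 < T) :
    ∃ C : ℝ, 0 < C ∧
      ∀ (N A B : ℝ), 1 ≤ N → 0 ≤ A → 0 ≤ B →
      ∀ (F : ℝ → E3 → ℝ) (V : ℝ → E3 → ℝ → ℝ),
        Continuous (fun p : ℝ × E3 => F p.1 p.2) →
        (∀ s : ℝ, 0 ≤ s →
          ((∫ x in T3, F s x) = 0 ∧
           L2norm1 (F s) ≤ A * Real.exp (-ν * N ^ 2 * s) ∧
           Hnorm1 (r + 1) (F s) ≤ B * Real.exp (-ν * N ^ 2 * s) ∧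
           ContDiffOn ℝ (⊤ : ℕ∞) (fun p : E3 × ℝ => V s p.1 p.2) (Set.univ ×ˢ Set.Ici 0) ∧
           (∀ τ, SpacePeriodic (fun x => V s x τ)) ∧
           IsHeat ν (Set.Ici 0) (V s) ∧
           (∀ x, V s x 0 = F s x))) →
        ∀ t : ℝ, T ≤ t →
          (∫ s in (0:ℝ)..t, Hnorm1 (r + 1) (fun x => V s x (t - s))) ≤
            C * (A * N ^ (-2 : ℤ) + B * Real.exp (-ν * N ^ 2 * t / 2)) := by
  have hh : 0 < T / (2 * (r + 1)) := by positivity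
  obtain ⟨K, hK⟩ : ∃ K : ℝ, K = √(∑ k ∈ Finset.range (r + 1 + 1), ∑ _β ∈ midx k,
    (2 * ν * (T / (2 * (r + 1))))⁻¹ ^ k) := ⟨_, rfl⟩
  have hK0 : 0 ≤ K := hK ▸ Real.sqrt_nonneg _
  refine ⟨(K + 1) / ν, by positivity, ?_⟩
  intro N A B hN hA hB F V _ hFV t ht
  have ha : 0 < ν * N ^ 2 := by positivity
  have hNz : N ^ (-2 : ℤ) = (N ^ 2)⁻¹ := by
    rw [zpow_neg, zpow_ofNat]
  rw [hNz]
  by_cases hint : IntervalIntegrable (fun s => Hnorm1 (r + 1) (fun x => V s x (t - s))) volume 0 t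
  swap
  · rw [intervalIntegral.integral_undef hint]
    positivity
  have hflow : ∀ s, 0 ≤ s → IsPeriodicHeatFlow ν (V s) := fun s hs =>
    let h := (hFV s hs).2.2.2
    isPeriodicHeatFlow_of_isHeat h.1 h.2.1 h.2.2.1
  have hinit : ∀ s, 0 ≤ s → (fun x => V s x 0) = F s := fun s hs =>
    funext (hFV s hs).2.2.2.2.2.2
  have hbig : ∀ s ∈ Icc 0 (t / 2), Hnorm1 (r + 1) (fun x => V s x (t - s)) ≤
      K * A * Real.exp (-(ν * N ^ 2) * s) := fun s hs => by
    have h1 := (hflow s hs.1).Hnorm1_le_L2norm1 hν (r + 1) (τ := t - s) hh (by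
      have : ((r + 1 : ℕ) : ℝ) * (T / (2 * (r + 1))) = T / 2 := by
        push_cast
        have : (r : ℝ) + 1 ≠ 0 := by positivity
        field_simp
      linarith [hs.2])
    rw [hinit s hs.1, ← hK] at h1
    have h2 := (hFV s hs.1).2.1
    rw [neg_mul] at h2
    rw [mul_assoc]
    exact h1.trans (mul_le_mul_of_nonneg_left h2 hK0)
  have hsmall : ∀ s ∈ Icc (t / 2) t, Hnorm1 (r + 1) (fun x => V s x (t - s)) ≤
      B * Real.exp (-(ν * N ^ 2) * s) := fun s hs => by
    have hs0 : 0 ≤ s := by linarith [hs.1]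
    have h1 := (hflow s hs0).Hnorm1_le hν (r + 1) (sub_nonneg.2 hs.2)
    rw [hinit s hs0] at h1
    have h2 := (hFV s hs0).2.2.1
    rw [neg_mul] at h2
    exact h1.trans h2
  have hi1 := hint.mono_set (c := 0) (d := t / 2) (by
    rw [uIcc_of_le (by linarith), uIcc_of_le (by linarith)]
    exact Icc_subset_Icc_right (by linarith))
  have hi2 := hint.mono_set (c := t / 2) (d := t) (by
    rw [uIcc_of_le (by linarith), uIcc_of_le (by linarith)]
    exact Icc_subset_Icc_left (by linarith))
  have hI1 := intervalIntegral.integral_mono_on (by linarith) hi1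
    (Continuous.intervalIntegrable (by fun_prop) _ _) hbig
  have hI2 := intervalIntegral.integral_mono_on (by linarith) hi2
    (Continuous.intervalIntegrable (by fun_prop) _ _) hsmall
  rw [intervalIntegral.integral_const_mul] at hI1 hI2
  have he1 := intervalIntegral_exp_neg_mul_le ha 0 (t / 2)
  have he2 := intervalIntegral_exp_neg_mul_le ha (t / 2) t
  rw [mul_zero, Real.exp_zero] at he1
  have hexp : -(ν * N ^ 2) * (t / 2) = -ν * N ^ 2 * t / 2 := by ring
  rw [hexp] at he2
  rw [← intervalIntegral.integral_add_adjacent_intervals hi1 hi2]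
  have hA1 : K * A * (1 / (ν * N ^ 2)) ≤ (K + 1) / ν * (A * (N ^ 2)⁻¹) := by
    have : (K + 1) / ν * (A * (N ^ 2)⁻¹) - K * A * (1 / (ν * N ^ 2)) = A / (ν * N ^ 2) := by
      field_simp
      ring
    have : 0 ≤ A / (ν * N ^ 2) := by positivity
    linarith
  have hB1 : B * (Real.exp (-ν * N ^ 2 * t / 2) / (ν * N ^ 2)) ≤
      (K + 1) / ν * (B * Real.exp (-ν * N ^ 2 * t / 2)) := by
    have hle : 1 / (ν * N ^ 2) ≤ (K + 1) / ν :=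
      div_le_div₀ (by linarith) (by linarith) hν (le_mul_of_one_le_right hν.le (one_le_pow₀ hN))
    have := mul_le_mul_of_nonneg_right hle
      (by positivity : 0 ≤ B * Real.exp (-ν * N ^ 2 * t / 2))
    refine le_trans (le_of_eq ?_) this
    ring
  rw [mul_add]
  exact add_le_add
    ((hI1.trans (mul_le_mul_of_nonneg_left he1 (by positivity))).trans hA1)
    ((hI2.trans (mul_le_mul_of_nonneg_left he2 hB)).trans hB1)
end
end

section
/- Let W be a smooth vector field on 𝕋³ that is not identically zero and satisfies curl W = λW for some real number λ ≠ 0. Then there exists a nonzero integer vector k ∈ ℤ³ such that λ² = k₁² + k₂² + k₃²; in other words, every nonzero eigenvalue λ of the curl operator on 𝕋³ is of the form λ = ±|k| with k ∈ ℤ³. -/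
open MeasureTheory Real Set

noncomputable section

open Complex in
/-- The Fourier coefficient, on the unit cube, of a function on `ℝᵈ`. -/
def cubeFourierCoeff {d : Type*} [Fintype d] (F : (d → ℝ) → ℂ) (n : d → ℤ) : ℂ :=
  ∫ x in Icc (0 : d → ℝ) 1, cexp (-(2 * π * I * ∑ i, (n i : ℂ) * x i)) * F x

theorem periodic_int_vector {d X : Type*} [Fintype d] [DecidableEq d] {F : (d → ℝ) → X}
    (hF : ∀ j, Function.Periodic F (Pi.single j 1)) (m : d → ℤ) :
    Function.Periodic F (fun i => (m i : ℝ)) := by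
  have h : ∀ s : Finset d, Function.Periodic F (∑ j ∈ s, m j • (Pi.single j 1 : d → ℝ)) := by
    intro s
    induction s using Finset.induction_on with
    | empty => intro x; simp
    | insert a s ha ih =>
      rw [Finset.sum_insert ha]
      exact ((hF a).zsmul (m a)).add_period ih
  convert! h Finset.univ using 1
  ext i
  simp [Finset.sum_apply, Pi.single_apply]

theorem mFourier_coe {d : Type*} [Fintype d] (n : d → ℤ) (x : d → ℝ) :
    UnitAddTorus.mFourier n (fun i => (x i : UnitAddCircle)) =
      Complex.exp (2 * π * Complex.I * ∑ i, (n i : ℂ) * x i) := by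
  simp only [UnitAddTorus.mFourier, ContinuousMap.coe_mk, fourier_coe_apply]
  rw [← Complex.exp_sum, Finset.mul_sum]
  congr 1
  refine Finset.sum_congr rfl fun i _ => ?_
  push_cast
  ring

theorem exists_cubeFourierCoeff_ne_zero {d : Type*} [Fintype d] [DecidableEq d]
    {F : (d → ℝ) → ℂ} (hc : Continuous F) (hF : ∀ j, Function.Periodic F (Pi.single j 1))
    (hnz : ∃ x, F x ≠ 0) : ∃ n, cubeFourierCoeff F n ≠ 0 := by
  by_contra! h
  let q : C(d → ℝ, UnitAddTorus d) :=
    ⟨fun x i => (x i : UnitAddCircle), continuous_pi fun i =>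
      (AddCircle.continuous_mk' 1).comp (continuous_apply i)⟩
  have hq : Topology.IsQuotientMap q :=
    (IsOpenQuotientMap.piMap (f := fun (_ : d) (t : ℝ) => (t : UnitAddCircle))
      fun _ => QuotientAddGroup.isOpenQuotientMap_mk).isQuotientMap
  have hfac : Function.FactorsThrough (⟨F, hc⟩ : C(d → ℝ, ℂ)) q := by
    intro x y hxy
    have hm : ∀ i, ∃ m : ℤ, x i = y i + m := fun i => by
      have hi : (x i : UnitAddCircle) = y i := congrFun hxy i
      rw [← sub_eq_zero, ← AddCircle.coe_sub, AddCircle.coe_eq_zero_iff] at hi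
      obtain ⟨m, hm⟩ := hi
      exact ⟨m, by simp at hm; linarith⟩
    choose m hm using hm
    have : x = y + fun i => (m i : ℝ) := funext hm
    simp only [ContinuousMap.coe_mk]
    rw [this]
    exact periodic_int_vector hF m y
  let G := hq.lift ⟨F, hc⟩ hfac
  have hG : ∀ x : d → ℝ, G (fun i => (x i : UnitAddCircle)) = F x := fun x =>
    congrArg (fun f : C(d → ℝ, ℂ) => f x) (hq.lift_comp ⟨F, hc⟩ hfac)
  have hcoeff : ∀ n, UnitAddTorus.mFourierCoeff G n = 0 := fun n => by
    rw [UnitAddTorus.mFourierCoeff_eq_integral _ _ 0, ← h n, cubeFourierCoeff]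
    have hset : {x : d → ℝ | ∀ i, x i ∈ Ioc ((0 : d → ℝ) i) ((0 : d → ℝ) i + 1)} =
        Set.univ.pi fun i => Ioc ((0 : d → ℝ) i) ((1 : d → ℝ) i) := by
      ext x; simp
    rw [hset, volume_pi, setIntegral_congr_set Measure.univ_pi_Ioc_ae_eq_Icc]
    refine integral_congr_ae (.of_forall fun x => ?_)
    simp only [hG, mFourier_coe, smul_eq_mul]
    simp
  obtain ⟨x, hx⟩ := hnz
  have hsum : Summable (UnitAddTorus.mFourierCoeff G) := by
    rw [funext hcoeff]; exact summable_zero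
  have := UnitAddTorus.hasSum_mFourier_series_apply_of_summable hsum
    (fun i => (x i : UnitAddCircle))
  simp only [hcoeff, zero_smul, hG] at this
  exact hx (this.unique hasSum_zero)

theorem integral_cube_fderiv_eq_zero {n : ℕ} {F : (Fin (n + 1) → ℝ) → ℂ} (hF : ContDiff ℝ 1 F)
    (j : Fin (n + 1)) (hper : Function.Periodic F (Pi.single j 1)) :
    ∫ x in Icc (0 : Fin (n + 1) → ℝ) 1, fderiv ℝ F x (Pi.single j 1) = 0 := by
  have hd : ∀ i x, HasFDerivAt (if i = j then F else 0) (if i = j then fderiv ℝ F x else 0) x := by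
    intro i x
    split_ifs
    · exact (hF.differentiable one_ne_zero x).hasFDerivAt
    · exact hasFDerivAt_const _ _
  have hsum : ∀ x : Fin (n + 1) → ℝ,
      ∑ i, (if i = j then fderiv ℝ F x else 0) (Pi.single i 1) =
        fderiv ℝ F x (Pi.single j 1) := by
    intro x
    rw [Finset.sum_eq_single j (fun i _ hi => by simp [hi]) (by simp)]
    simp
  have hcont : Continuous fun x => fderiv ℝ F x (Pi.single j 1) :=
    (hF.continuous_fderiv one_ne_zero).clm_apply continuous_const
  have key := integral_divergence_of_hasFDerivAt_off_countable' (0 : Fin (n + 1) → ℝ) 1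
    zero_le_one (fun i => if i = j then F else 0)
    (fun i x => if i = j then fderiv ℝ F x else 0) ∅ countable_empty
    (fun i x _ => (hd i x).continuousAt.continuousWithinAt) (fun x _ i => hd i x)
    (by simp only [hsum]; exact hcont.continuousOn.integrableOn_compact isCompact_Icc)
  simp only [hsum] at key
  rw [key]
  refine Finset.sum_eq_zero fun i _ => ?_
  split_ifs with hi
  · subst hi
    rw [sub_eq_zero]
    refine integral_congr_ae (.of_forall fun x => ?_)
    have : i.insertNth (1 : ℝ) x = i.insertNth (0 : ℝ) x + (Pi.single i 1 : Fin (n + 1) → ℝ) := by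
      ext k
      refine Fin.succAboveCases i ?_ (fun l => ?_) k <;> simp
    simp only [Pi.one_apply, Pi.zero_apply]
    rw [this]
    exact hper _
  · simp

open Complex in
theorem cubeFourierCoeff_fderiv {n : ℕ} {F : (Fin (n + 1) → ℝ) → ℂ} (hF : ContDiff ℝ 1 F)
    (j : Fin (n + 1)) (hper : Function.Periodic F (Pi.single j 1)) (k : Fin (n + 1) → ℤ) :
    cubeFourierCoeff (fun x => fderiv ℝ F x (Pi.single j 1)) k =
      2 * π * I * k j * cubeFourierCoeff F k := by
  set e : (Fin (n + 1) → ℝ) → ℂ := fun x => cexp (-(2 * π * I * ∑ i, (k i : ℂ) * x i)) with he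
  have he_eq : ∀ x, e x = UnitAddTorus.mFourier (-k) (fun i => (x i : UnitAddCircle)) := by
    intro x
    rw [mFourier_coe]
    simp [he]
  let L : (Fin (n + 1) → ℝ) →L[ℝ] ℂ :=
    ∑ i, (k i : ℂ) • (ofRealCLM ∘L ContinuousLinearMap.proj (R := ℝ) i)
  have hL : ∀ x, L x = ∑ i, (k i : ℂ) * x i := fun x => by
    simp [L]
  have hlin : ∀ x, HasFDerivAt (fun x : Fin (n + 1) → ℝ => ∑ i, (k i : ℂ) * x i) L x := fun x => by
    simpa only [← hL] using L.hasFDerivAt (x := x)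
  have hlinv : L (Pi.single j 1) = k j := by
    rw [hL, Finset.sum_eq_single j (fun i _ hi => by simp [hi]) (by simp)]
    simp
  have hed : ∀ x, HasFDerivAt e (e x • -((2 * π * I) • L)) x := fun x =>
    (((hlin x).const_mul (2 * π * I)).neg).cexp
  have hesm : ContDiff ℝ 1 e := by
    simp only [he, ← hL]
    exact (contDiff_const.mul L.contDiff).neg.cexp
  have heper : Function.Periodic e (Pi.single j 1) := by
    intro x
    rw [he_eq, he_eq]
    congr 1
    ext i
    rcases eq_or_ne i j with rfl | hij
    · simp
    · simp [hij]
  have hprod : ∀ x, fderiv ℝ (fun x => e x * F x) x (Pi.single j 1) =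
      e x * fderiv ℝ F x (Pi.single j 1) - 2 * π * I * k j * (e x * F x) := by
    intro x
    rw [((hed x).fun_mul (hF.differentiable one_ne_zero x).hasFDerivAt).fderiv]
    simp only [add_apply, smul_apply, neg_apply, hlinv, smul_eq_mul]
    ring
  have h0 := integral_cube_fderiv_eq_zero (hesm.mul hF) j (heper.mul hper)
  simp only [hprod] at h0
  have hi : ∀ g : (Fin (n + 1) → ℝ) → ℂ, Continuous g → IntegrableOn g (Icc 0 1) := fun g hg =>
    hg.continuousOn.integrableOn_compact isCompact_Icc
  have hec := hesm.continuous
  have hFc := hF.continuous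
  have hFd := (hF.continuous_fderiv one_ne_zero).clm_apply
    (continuous_const (y := (Pi.single j 1 : Fin (n + 1) → ℝ)))
  rw [integral_sub (hi _ (by fun_prop)) (hi _ (by fun_prop)), integral_const_mul,
    sub_eq_zero] at h0
  exact h0

theorem sq_eq_sum_sq_of_curl_symbol {a b c l : ℂ} {k : Fin 3 → ℂ} (hl : l ≠ 0)
    (h0 : Complex.I * (k 1 * c - k 2 * b) = l * a)
    (h1 : Complex.I * (k 2 * a - k 0 * c) = l * b)
    (h2 : Complex.I * (k 0 * b - k 1 * a) = l * c)
    (hne : a ≠ 0 ∨ b ≠ 0 ∨ c ≠ 0) : l ^ 2 = ∑ i, k i ^ 2 := by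
  have hdiv : k 0 * a + k 1 * b + k 2 * c = 0 := by
    refine (mul_eq_zero.mp ?_).resolve_left hl
    linear_combination -k 0 * h0 - k 1 * h1 - k 2 * h2
  have hI := Complex.I_mul_I
  rw [Fin.sum_univ_three]
  rcases hne with h | h | h <;> refine mul_right_cancel₀ h ?_
  · linear_combination -l * h0 - Complex.I * (k 1 * h2 - k 2 * h1) +
      (k 1 * (k 0 * b - k 1 * a) - k 2 * (k 2 * a - k 0 * c)) * hI - k 0 * hdiv
  · linear_combination -l * h1 - Complex.I * (k 2 * h0 - k 0 * h2) +
      (k 2 * (k 1 * c - k 2 * b) - k 0 * (k 0 * b - k 1 * a)) * hI - k 1 * hdiv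
  · linear_combination -l * h2 - Complex.I * (k 0 * h1 - k 1 * h0) +
      (k 0 * (k 2 * a - k 0 * c) - k 1 * (k 1 * c - k 2 * b)) * hI - k 2 * hdiv

theorem periodic_rescale {X : Type*} {f : E3 → X} (hf : SpacePeriodic f) (j : Fin 3) :
    Function.Periodic (fun y => f ((2 * π) • y)) (Pi.single j 1) := fun y => by
  simp only [smul_add]
  exact hf _ j

theorem cubeFourierCoeff_pd {f : E3 → ℝ} (hf : ContDiff ℝ 1 f) (hper : SpacePeriodic f)
    (j : Fin 3) (k : Fin 3 → ℤ) :
    cubeFourierCoeff (fun y => (pd j f ((2 * π) • y) : ℂ)) k =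
      Complex.I * k j * cubeFourierCoeff (fun y => (f ((2 * π) • y) : ℂ)) k := by
  have hd : ∀ y, fderiv ℝ (fun y : E3 => (f ((2 * π) • y) : ℂ)) y (Pi.single j 1) =
      (2 * π) * (pd j f ((2 * π) • y) : ℂ) := by
    intro y
    have h1 : HasFDerivAt (fun y : E3 => (2 * π) • y)
        ((2 * π) • ContinuousLinearMap.id ℝ E3) y := (hasFDerivAt_id y).const_smul (2 * π)
    have h2 := ((hf.differentiable one_ne_zero ((2 * π) • y)).hasFDerivAt).comp y h1
    have h3 := Complex.ofRealCLM.hasFDerivAt.comp y h2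
    have h4 : HasFDerivAt (fun y : E3 => (f ((2 * π) • y) : ℂ)) _ y := h3
    rw [h4.fderiv]
    simp [pd]
  have hsm : ContDiff ℝ 1 (fun y : E3 => (f ((2 * π) • y) : ℂ)) :=
    Complex.ofRealCLM.contDiff.comp (hf.comp (contDiff_id.const_smul (2 * π)))
  have key := cubeFourierCoeff_fderiv hsm j
    ((periodic_rescale hper j).comp (fun t : ℝ => (t : ℂ))) k
  simp only [hd] at key
  have hpi : (2 * π : ℂ) ≠ 0 := by simp [Real.pi_ne_zero]
  refine mul_left_cancel₀ hpi ?_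
  trans cubeFourierCoeff (fun y => (2 * π) * (pd j f ((2 * π) • y) : ℂ)) k
  · simp only [cubeFourierCoeff]
    rw [← integral_const_mul]
    refine integral_congr_ae (.of_forall fun x => ?_)
    ring
  · rw [key]; ring

theorem cubeFourierCoeff_sub {d : Type*} [Fintype d] {F G : (d → ℝ) → ℂ} (hF : Continuous F)
    (hG : Continuous G) (k : d → ℤ) :
    cubeFourierCoeff (fun x => F x - G x) k = cubeFourierCoeff F k - cubeFourierCoeff G k := by
  simp only [cubeFourierCoeff, mul_sub]
  refine integral_sub ?_ ?_ <;>
    exact (Continuous.continuousOn (by fun_prop)).integrableOn_compact isCompact_Icc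

theorem cubeFourierCoeff_const_mul {d : Type*} [Fintype d] (c : ℂ) (F : (d → ℝ) → ℂ)
    (k : d → ℤ) :
    cubeFourierCoeff (fun x => c * F x) k = c * cubeFourierCoeff F k := by
  simp only [cubeFourierCoeff, mul_left_comm _ c, integral_const_mul]

/-- the nonzero eigenvalues of the curl operator on `𝕋³` are of the form
`±|k|` with `k ∈ ℤ³`. -/
theorem curl_eigenvalue_is_lattice_norm
    (lam : ℝ) (hlam : lam ≠ 0) (W : E3 → E3)
    (hW : ContDiff ℝ (⊤ : ℕ∞) W) (hper : SpacePeriodic W)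
    (hnz : ∃ x, W x ≠ 0)
    (hBel : ∀ x, vcurl W x = lam • W x) :
    ∃ k : Fin 3 → ℤ, k ≠ 0 ∧ lam ^ 2 = ∑ i, (k i : ℝ) ^ 2 := by
  have hW1 : ∀ i, ContDiff ℝ 1 (fun y => W y i) := fun i =>
    ((contDiff_pi.mp hW) i).of_le (by exact_mod_cast le_top)
  have hpi : ∀ i, SpacePeriodic (fun y => W y i) := fun i x j => congrFun (hper x j) i
  have hpdc : ∀ i j, Continuous fun y : E3 => (pd j (fun z => W z i) ((2 * π) • y) : ℂ) :=
    fun i j => Complex.continuous_ofReal.comp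
      ((((hW1 i).continuous_fderiv one_ne_zero).clm_apply continuous_const).comp
        (continuous_const_smul (2 * π)))
  obtain ⟨x, hx⟩ := hnz
  obtain ⟨i, hi⟩ := Function.ne_iff.mp hx
  obtain ⟨k, hk⟩ := exists_cubeFourierCoeff_ne_zero
    (F := fun y : E3 => (W ((2 * π) • y) i : ℂ))
    (Complex.continuous_ofReal.comp ((hW1 i).continuous.comp (continuous_const_smul (2 * π))))
    (fun j => (periodic_rescale (hpi i) j).comp (fun t : ℝ => (t : ℂ)))
    ⟨(2 * π)⁻¹ • x, by
      simpa only [smul_inv_smul₀ Real.two_pi_pos.ne', ne_eq, Pi.zero_apply, Complex.ofReal_eq_zero] using hi⟩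
  let w : Fin 3 → ℂ := fun i => cubeFourierCoeff (fun y => (W ((2 * π) • y) i : ℂ)) k
  have hcurl : ∀ p q r s t : Fin 3,
      (∀ x, pd p (fun y => W y q) x - pd r (fun y => W y s) x = lam * W x t) →
      Complex.I * (k p * w q - k r * w s) = lam * w t := by
    intro p q r s t h
    have := cubeFourierCoeff_const_mul (lam : ℂ) (fun y => (W ((2 * π) • y) t : ℂ)) k
    rw [← this]
    simp only [← Complex.ofReal_mul, ← h, Complex.ofReal_sub]
    rw [cubeFourierCoeff_sub (hpdc q p) (hpdc s r), cubeFourierCoeff_pd (hW1 q) (hpi q),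
      cubeFourierCoeff_pd (hW1 s) (hpi s)]
    ring
  have hsq := sq_eq_sum_sq_of_curl_symbol (k := fun i => (k i : ℂ))
    (Complex.ofReal_ne_zero.mpr hlam)
    (hcurl 1 2 2 1 0 fun x => by simpa [vcurl] using congrFun (hBel x) 0)
    (hcurl 2 0 0 2 1 fun x => by simpa [vcurl] using congrFun (hBel x) 1)
    (hcurl 0 1 1 0 2 fun x => by simpa [vcurl] using congrFun (hBel x) 2)
    (by
      have : w i ≠ 0 := hk
      fin_cases i
      · exact .inl this
      · exact .inr (.inl this)
      · exact .inr (.inr this))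
  have hsq' : lam ^ 2 = ∑ i, (k i : ℝ) ^ 2 := by exact_mod_cast hsq
  refine ⟨k, ?_, hsq'⟩
  rintro rfl
  exact hlam (by simpa using hsq')
end
end
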